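/- arXiv:1609.02074 — 9 statements merged into one kernel-verified Lean document; each statement's English description precedes it below -/
import Mathlib

section
/- For every real p > 0, one has J(p) = sSup { p * Real.log s + Real.arccos (n*s/2) - Real.arccos (n/2) : s ∈ Set.Ioc 0 (2/n) }; that is, the closed-form expression for J coincides with the variational (supremum) definition of the large-deviation function for the number of separating loops. -/
/-!
Substitute `n * s / 2 = sin θ` with `θ ∈ (0, π/2]` and put `θ₀ = arctan p`, so that
`sin θ₀ = p / √(1 + p²)`. Up to constants the objective becomes `p * log (sin θ) - θ`, and its
value at `θ₀` is the closed form of `J`. That `θ₀` is a maximizer follows from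
`log x ≤ x - 1` at `x = sin θ / sin θ₀`, which gives
`p * log (sin θ / sin θ₀) ≤ (sin θ - sin θ₀) / cos θ₀`, and from the tangent line bound
`sin θ - sin θ₀ ≤ cos θ₀ * (θ - θ₀)` given by concavity of `sin` on `[0, π]`.
The supremum is therefore attained, at `s = (2 / n) * sin θ₀`.
-/

/-- The large-deviation function for the number of separating loops,
`J(p) = p * log((2/n) * p / sqrt (1+p^2)) + arccot p - arccos (n/2)`,
where `arccot p = pi/2 - arctan p`. -/
noncomputable def J (n p : ℝ) : ℝ :=
  p * Real.log ((2 / n) * p / Real.sqrt (1 + p ^ 2)) +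
    (Real.pi / 2 - Real.arctan p) - Real.arccos (n / 2)

/-- Tangent line bound for the concave function `sin` on `[0, π]`. -/
lemma sin_sub_sin_le_cos_mul {a b : ℝ} (ha : a ∈ Set.Icc 0 Real.pi)
    (hb : b ∈ Set.Icc 0 Real.pi) :
    Real.sin b - Real.sin a ≤ Real.cos a * (b - a) := by
  have hc : ConcaveOn ℝ (Set.Icc 0 Real.pi) Real.sin := strictConcaveOn_sin_Icc.concaveOn
  rcases lt_trichotomy a b with h | h | h
  · have := hc.slope_le_of_hasDerivAt ha hb h (Real.hasDerivAt_sin a)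
    rwa [slope_def_field, div_le_iff₀ (sub_pos.2 h)] at this
  · simp [h]
  · have := hc.le_slope_of_hasDerivAt hb ha h (Real.hasDerivAt_sin a)
    rw [slope_def_field, le_div_iff₀ (sub_pos.2 h)] at this
    linarith

/-- The maximality statement in the normalized variable `u = n * s / 2`. -/
lemma mul_log_add_arccos_le {p u : ℝ} (hp : 0 < p) (hu0 : 0 < u) (hu1 : u ≤ 1) :
    p * Real.log u + Real.arccos u ≤
      p * Real.log (p / √(1 + p ^ 2)) + (Real.pi / 2 - Real.arctan p) := by
  have hr : 0 < √(1 + p ^ 2) := by positivity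
  have hv : 0 < p / √(1 + p ^ 2) := by positivity
  have hlog := Real.log_le_sub_one_of_pos (div_pos hu0 hv)
  rw [Real.log_div hu0.ne' hv.ne'] at hlog
  have htan := sin_sub_sin_le_cos_mul (a := Real.arctan p) (b := Real.arcsin u)
    ⟨(Real.arctan_pos.2 hp).le, by linarith [Real.arctan_lt_pi_div_two p, Real.pi_pos]⟩
    ⟨Real.arcsin_nonneg.2 hu0.le, by linarith [Real.arcsin_le_pi_div_two u, Real.pi_pos]⟩
  rw [Real.sin_arcsin (by linarith) hu1, Real.sin_arctan, Real.cos_arctan, one_div_mul_eq_div,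
    le_div_iff₀ hr] at htan
  have h1 : p * (u / (p / √(1 + p ^ 2)) - 1) = (u - p / √(1 + p ^ 2)) * √(1 + p ^ 2) := by
    field_simp
  have h2 := mul_le_mul_of_nonneg_left hlog hp.le
  rw [Real.arccos]
  linarith

/-- The closed form of `J` coincides with its variational (supremum) definition. -/
theorem J_eq_sSup (n : ℝ) (hn0 : 0 < n) (hn2 : n < 2) (p : ℝ) (hp : 0 < p) :
    J n p = sSup ((fun s : ℝ =>
      p * Real.log s + Real.arccos (n * s / 2) - Real.arccos (n / 2)) ''
        Set.Ioc (0 : ℝ) (2 / n)) := by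
  symm
  apply IsGreatest.csSup_eq
  have hr : 0 < √(1 + p ^ 2) := by positivity
  have hv : 0 < p / √(1 + p ^ 2) := by positivity
  have hv1 : p / √(1 + p ^ 2) ≤ 1 := by
    rw [← Real.sin_arctan]
    exact Real.sin_le_one _
  have h2n : 0 < 2 / n := by positivity
  refine ⟨⟨2 / n * p / √(1 + p ^ 2), ⟨by positivity, ?_⟩, ?_⟩, ?_⟩
  · rw [mul_div_assoc]
    exact mul_le_of_le_one_right h2n.le hv1
  · have h1 : n * (2 / n * p / √(1 + p ^ 2)) / 2 = Real.sin (Real.arctan p) := by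
      rw [Real.sin_arctan]
      field_simp
    have h2 : Real.arcsin (Real.sin (Real.arctan p)) = Real.arctan p :=
      Real.arcsin_sin (Real.neg_pi_div_two_lt_arctan p).le (Real.arctan_lt_pi_div_two p).le
    simp only [J, h1]
    rw [Real.arccos, h2]
  · rintro _ ⟨s, ⟨hs0, hs1⟩, rfl⟩
    have hs2 : n * s / 2 ≤ 1 := by
      rw [le_div_iff₀ hn0] at hs1
      linarith
    have key := mul_log_add_arccos_le hp (u := n * s / 2) (by positivity) hs2
    have e1 : s = 2 / n * (n * s / 2) := by field_simp
    have e2 : Real.log s = Real.log (2 / n) + Real.log (n * s / 2) := by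
      conv_lhs => rw [e1]
      exact Real.log_mul h2n.ne' (by positivity)
    simp only [J]
    rw [mul_div_assoc (2 / n), Real.log_mul h2n.ne' hv.ne', e2]
    linarith
end

section
/- For every real p > 0, set 𝔰(p) = (2/n) * p / Real.sqrt (1 + p^2). Then 0 < 𝔰(p) ≤ 2/n, and for every s ∈ Set.Ioc 0 (2/n) one has p * Real.log s + Real.arccos (n*s/2) - Real.arccos (n/2) ≤ J(p), with equality if and only if s = 𝔰(p); in other words the supremum defining J(p) is attained at the unique maximizer s = (2/n)·p/√(1+p²). -/
lemma hasDerivAt_tan_mul_log_sin_sub {α θ : ℝ} (hα : Real.cos α ≠ 0) (hθ : Real.sin θ ≠ 0) :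
    HasDerivAt (fun t => Real.tan α * Real.log (Real.sin t) - t)
      (Real.sin (α - θ) / (Real.cos α * Real.sin θ)) θ := by
  have h := (((Real.hasDerivAt_sin θ).log hθ).const_mul (Real.tan α)).sub (hasDerivAt_id' θ)
  refine h.congr_deriv ?_
  rw [Real.tan_eq_sin_div_cos, Real.sin_sub]
  field_simp

lemma tan_mul_log_sin_sub_lt {α θ : ℝ} (hα0 : 0 < α) (hα : α < Real.pi / 2)
    (hθ0 : 0 < θ) (hθ : θ ≤ Real.pi / 2) (hne : θ ≠ α) :
    Real.tan α * Real.log (Real.sin θ) - θ < Real.tan α * Real.log (Real.sin α) - α := by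
  have hcos : 0 < Real.cos α := Real.cos_pos_of_mem_Ioo ⟨by linarith, hα⟩
  have hsin : ∀ t, 0 < t → t ≤ Real.pi / 2 → 0 < Real.sin t := fun t h0 h1 =>
    Real.sin_pos_of_pos_of_lt_pi h0 (by linarith)
  have hder : ∀ t, 0 < t → t ≤ Real.pi / 2 → _ := fun t h0 h1 =>
    hasDerivAt_tan_mul_log_sin_sub hcos.ne' (hsin t h0 h1).ne'
  rcases lt_or_gt_of_ne hne with hlt | hgt
  · have hmono : StrictMonoOn (fun t => Real.tan α * Real.log (Real.sin t) - t)
        (Set.Icc θ α) := by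
      refine strictMonoOn_of_deriv_pos (convex_Icc _ _) (fun t ht =>
        (hder t (by linarith [ht.1]) (by linarith [ht.2])).continuousAt.continuousWithinAt) ?_
      rw [interior_Icc]
      intro t ht
      have h0 : 0 < t := hθ0.trans ht.1
      have h1 : t ≤ Real.pi / 2 := (ht.2.trans hα).le
      rw [(hder t h0 h1).deriv]
      exact div_pos (Real.sin_pos_of_pos_of_lt_pi (by linarith [ht.2]) (by linarith))
        (mul_pos hcos (hsin t h0 h1))
    exact hmono (Set.left_mem_Icc.2 hlt.le) (Set.right_mem_Icc.2 hlt.le) hlt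
  · have hanti : StrictAntiOn (fun t => Real.tan α * Real.log (Real.sin t) - t)
        (Set.Icc α θ) := by
      refine strictAntiOn_of_deriv_neg (convex_Icc _ _) (fun t ht =>
        (hder t (by linarith [ht.1]) (by linarith [ht.2])).continuousAt.continuousWithinAt) ?_
      rw [interior_Icc]
      intro t ht
      have h0 : 0 < t := hα0.trans ht.1
      have h1 : t ≤ Real.pi / 2 := (ht.2.trans_le hθ).le
      rw [(hder t h0 h1).deriv]
      exact div_neg_of_neg_of_pos
        (Real.sin_neg_of_neg_of_neg_pi_lt (by linarith [ht.1]) (by linarith))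
        (mul_pos hcos (hsin t h0 h1))
    exact hanti (Set.left_mem_Icc.2 hgt.le) (Set.right_mem_Icc.2 hgt.le) hgt

/-- The supremum defining `J p` is attained at the unique maximizer
`(2/n) * p / sqrt (1+p^2)`. -/
theorem J_sup_attained (n : ℝ) (hn0 : 0 < n) (hn2 : n < 2) (p : ℝ) (hp : 0 < p) :
    (0 < (2 / n) * p / Real.sqrt (1 + p ^ 2) ∧
      (2 / n) * p / Real.sqrt (1 + p ^ 2) ≤ 2 / n) ∧
    ∀ s ∈ Set.Ioc (0 : ℝ) (2 / n),
      p * Real.log s + Real.arccos (n * s / 2) - Real.arccos (n / 2) ≤ J n p ∧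
      (p * Real.log s + Real.arccos (n * s / 2) - Real.arccos (n / 2) = J n p ↔
        s = (2 / n) * p / Real.sqrt (1 + p ^ 2)) := by
  have hc : 0 < 2 / n := by positivity
  have hα0 : 0 < Real.arctan p := Real.arctan_pos.2 hp
  have hα := Real.arctan_lt_pi_div_two p
  have hsα : 0 < Real.sin (Real.arctan p) :=
    Real.sin_pos_of_pos_of_lt_pi hα0 (by linarith)
  have hform : (2 / n) * p / Real.sqrt (1 + p ^ 2) = 2 / n * Real.sin (Real.arctan p) := by
    rw [Real.sin_arctan, mul_div_assoc]
  unfold J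
  rw [hform]
  refine ⟨⟨by positivity, mul_le_of_le_one_right hc.le (Real.sin_le_one _)⟩, ?_⟩
  rintro s ⟨hs0, hs⟩
  have hx0 : 0 < n * s / 2 := by positivity
  have hx1 : n * s / 2 ≤ 1 := by
    rw [le_div_iff₀ hn0] at hs
    linarith
  obtain ⟨θ, hθdef⟩ : ∃ θ, θ = Real.arcsin (n * s / 2) := ⟨_, rfl⟩
  have hθ0 : 0 < θ := hθdef ▸ Real.arcsin_pos.2 hx0
  have hθ : θ ≤ Real.pi / 2 := hθdef ▸ Real.arcsin_le_pi_div_two _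
  have hsinθ : Real.sin θ = n * s / 2 := by
    rw [hθdef, Real.sin_arcsin (by linarith) hx1]
  have hsθ : s = 2 / n * Real.sin θ := by
    rw [hsinθ]
    field_simp
  have hsin0 : 0 < Real.sin θ := hsinθ ▸ hx0
  have harccos : Real.arccos (n * s / 2) = Real.pi / 2 - θ := by
    rw [hθdef, Real.arccos_eq_pi_div_two_sub_arcsin]
  rw [harccos, hsθ, Real.log_mul hc.ne' hsin0.ne', Real.log_mul hc.ne' hsα.ne']
  by_cases h : θ = Real.arctan p
  · simp [h]
  · have hlt := tan_mul_log_sin_sub_lt hα0 hα hθ0 hθ h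
    rw [Real.tan_arctan] at hlt
    refine ⟨by linarith, fun heq => by linarith, fun heq => absurd ?_ h⟩
    exact Real.injOn_sin ⟨by linarith, hθ⟩ ⟨by linarith, hα.le⟩ (mul_left_cancel₀ hc.ne' heq)
end

section
/- For every real p > 0, the second derivative of J at p exists and equals 1/(p*(p^2+1)); i.e., deriv (deriv J) p = 1/(p*(p^2+1)). -/
/-- Obtained from `log (2/n) + log x - (1/2) log (1 + x^2)`, the expansion of the logarithm
for `x > 0`. -/
lemma hasDerivAt_log_term (n : ℝ) (hn0 : 0 < n) (p : ℝ) (hp : 0 < p) :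
    HasDerivAt (fun x : ℝ => Real.log ((2 / n) * x / Real.sqrt (1 + x ^ 2)))
      (1 / (p * (p ^ 2 + 1))) p := by
  have hq : (1 + p ^ 2 : ℝ) ≠ 0 := by positivity
  have hquad : HasDerivAt (fun x : ℝ => 1 + x ^ 2) (2 * p) p := by
    simpa using (hasDerivAt_pow 2 p).const_add 1
  have h : HasDerivAt (fun x : ℝ => Real.log (2 / n) + Real.log x - Real.log (1 + x ^ 2) / 2)
      (p⁻¹ - 2 * p / (1 + p ^ 2) / 2) p :=
    ((Real.hasDerivAt_log hp.ne').const_add _).sub ((hquad.log hq).div_const 2)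
  have hval : p⁻¹ - 2 * p / (1 + p ^ 2) / 2 = 1 / (p * (p ^ 2 + 1)) := by
    have hq' : (p ^ 2 + 1 : ℝ) ≠ 0 := by positivity
    field_simp
    ring
  rw [hval] at h
  refine h.congr_of_eventuallyEq ?_
  filter_upwards [eventually_gt_nhds hp] with x hx
  have hs : Real.sqrt (1 + x ^ 2) ≠ 0 := by positivity
  rw [Real.log_div (by positivity) hs, Real.log_mul (by positivity) hx.ne',
    Real.log_sqrt (by positivity)]

/-- The product-rule term `p * (1 / (p * (p^2 + 1)))` cancels the derivative of `arccot`. -/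
lemma hasDerivAt_J (n : ℝ) (hn0 : 0 < n) (p : ℝ) (hp : 0 < p) :
    HasDerivAt (J n) (Real.log ((2 / n) * p / Real.sqrt (1 + p ^ 2))) p := by
  have h := (((hasDerivAt_id p).mul (hasDerivAt_log_term n hn0 p hp)).add
    ((Real.hasDerivAt_arctan p).const_sub (Real.pi / 2))).sub_const (Real.arccos (n / 2))
  refine HasDerivAt.congr_deriv (f := J n) h ?_
  have hq : (1 + p ^ 2 : ℝ) ≠ 0 := by positivity
  have hq' : (p ^ 2 + 1 : ℝ) ≠ 0 := by positivity
  simp only [id]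
  field_simp
  ring

/-- The second derivative of `J` exists at every `p > 0` and equals `1/(p*(p^2+1))`. -/
theorem hasDerivAt_deriv_J (n : ℝ) (hn0 : 0 < n) (hn2 : n < 2) (p : ℝ) (hp : 0 < p) :
    HasDerivAt (deriv (J n)) (1 / (p * (p ^ 2 + 1))) p ∧
      deriv (deriv (J n)) p = 1 / (p * (p ^ 2 + 1)) := by
  have h : HasDerivAt (deriv (J n)) (1 / (p * (p ^ 2 + 1))) p := by
    refine (hasDerivAt_log_term n hn0 p hp).congr_of_eventuallyEq ?_
    filter_upwards [eventually_gt_nhds hp] with x hx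
    exact (hasDerivAt_J n hn0 x hx).deriv
  exact ⟨h, h.deriv⟩
end

section
/- Let p_opt = n / Real.sqrt (4 - n^2). Then J(p_opt) = 0, J(p) ≥ 0 for every p > 0, and J(p) > 0 for every p > 0 with p ≠ p_opt; so J attains its minimum value 0 on (0,∞) exactly at p_opt. -/
lemma J_hasDerivAt {n p : ℝ} (hn : 0 < n) (hp : 0 < p) :
    HasDerivAt (J n) (Real.log ((2 / n) * p / Real.sqrt (1 + p ^ 2))) p := by
  have h1 : (0 : ℝ) < 1 + p ^ 2 := by positivity
  have hs : 0 < Real.sqrt (1 + p ^ 2) := Real.sqrt_pos.2 h1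
  have hss : Real.sqrt (1 + p ^ 2) ^ 2 = 1 + p ^ 2 := Real.sq_sqrt h1.le
  have hsqrt : HasDerivAt (fun x : ℝ => Real.sqrt (1 + x ^ 2)) (p / Real.sqrt (1 + p ^ 2)) p := by
    refine ((((hasDerivAt_pow 2 p).const_add 1).sqrt h1.ne')).congr_deriv ?_
    field_simp
    norm_num
  have hq : HasDerivAt (fun x : ℝ => (2 / n) * x / Real.sqrt (1 + x ^ 2))
      (((2 / n) * Real.sqrt (1 + p ^ 2) - (2 / n) * p * (p / Real.sqrt (1 + p ^ 2)))
        / Real.sqrt (1 + p ^ 2) ^ 2) p := by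
    refine (((hasDerivAt_id p).const_mul (2 / n)).div hsqrt hs.ne').congr_deriv ?_
    simp
  have hne : (2 / n) * p / Real.sqrt (1 + p ^ 2) ≠ 0 := by positivity
  have h := (((hasDerivAt_id p).mul (hq.log hne)).add
    ((Real.hasDerivAt_arctan p).const_sub (Real.pi / 2))).sub_const (Real.arccos (n / 2))
  refine HasDerivAt.congr_deriv h ?_
  generalize Real.log ((2 / n) * p / Real.sqrt (1 + p ^ 2)) = L
  simp only [id]
  rw [← hss]
  rw [Real.sqrt_sq hs.le]
  generalize Real.sqrt (1 + p ^ 2) = s at hs hss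
  field_simp
  linear_combination hss

lemma J_pOpt {n : ℝ} (hn0 : 0 < n) (hn2 : n < 2) : J n (n / Real.sqrt (4 - n ^ 2)) = 0 := by
  have hq : (0 : ℝ) < 4 - n ^ 2 := by nlinarith
  have hs : 0 < Real.sqrt (4 - n ^ 2) := Real.sqrt_pos.2 hq
  have hss : Real.sqrt (4 - n ^ 2) ^ 2 = 4 - n ^ 2 := Real.sq_sqrt hq.le
  have hr : Real.sqrt (1 + (n / Real.sqrt (4 - n ^ 2)) ^ 2) = 2 / Real.sqrt (4 - n ^ 2) := by
    rw [Real.sqrt_eq_iff_eq_sq (by positivity) (by positivity), div_pow, div_pow, hss]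
    field_simp
    ring
  have ha : n / Real.sqrt (4 - n ^ 2) / (2 / Real.sqrt (4 - n ^ 2)) = n / 2 := by
    field_simp
  unfold J
  rw [Real.arctan_eq_arcsin, hr, mul_div_assoc, ha, Real.arccos_eq_pi_div_two_sub_arcsin,
    div_mul_div_cancel₀ hn0.ne']
  simp

lemma J_log_neg {n p : ℝ} (hn0 : 0 < n) (hn2 : n < 2) (hp : 0 < p)
    (h : p < n / Real.sqrt (4 - n ^ 2)) :
    Real.log ((2 / n) * p / Real.sqrt (1 + p ^ 2)) < 0 := by
  have hq : (0 : ℝ) < 4 - n ^ 2 := by nlinarith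
  have hs : 0 < Real.sqrt (4 - n ^ 2) := Real.sqrt_pos.2 hq
  have hss : Real.sqrt (4 - n ^ 2) ^ 2 = 4 - n ^ 2 := Real.sq_sqrt hq.le
  rw [lt_div_iff₀ hs] at h
  have h2 := pow_lt_pow_left₀ h (by positivity) two_ne_zero
  rw [mul_pow, hss] at h2
  apply Real.log_neg (by positivity)
  rw [div_lt_one (by positivity)]
  apply Real.lt_sqrt_of_sq_lt
  rw [mul_pow, div_pow, div_mul_eq_mul_div, div_lt_iff₀ (by positivity)]
  linarith

lemma J_log_pos {n p : ℝ} (hn0 : 0 < n) (hn2 : n < 2)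
    (h : n / Real.sqrt (4 - n ^ 2) < p) :
    0 < Real.log ((2 / n) * p / Real.sqrt (1 + p ^ 2)) := by
  have hq : (0 : ℝ) < 4 - n ^ 2 := by nlinarith
  have hs : 0 < Real.sqrt (4 - n ^ 2) := Real.sqrt_pos.2 hq
  have hss : Real.sqrt (4 - n ^ 2) ^ 2 = 4 - n ^ 2 := Real.sq_sqrt hq.le
  have hp : 0 < p := lt_trans (by positivity) h
  rw [div_lt_iff₀ hs] at h
  have h2 := pow_lt_pow_left₀ h hn0.le two_ne_zero
  rw [mul_pow, hss] at h2
  apply Real.log_pos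
  rw [one_lt_div (by positivity), Real.sqrt_lt' (by positivity),
    mul_pow, div_pow, div_mul_eq_mul_div, lt_div_iff₀ (by positivity)]
  linarith

/-- `J` attains its minimum value `0` on `(0,∞)` exactly at `p_opt = n / sqrt (4-n^2)`. -/
theorem J_min_at_pOpt (n : ℝ) (hn0 : 0 < n) (hn2 : n < 2) :
    J n (n / Real.sqrt (4 - n ^ 2)) = 0 ∧
    (∀ p : ℝ, 0 < p → 0 ≤ J n p) ∧
    (∀ p : ℝ, 0 < p → p ≠ n / Real.sqrt (4 - n ^ 2) → 0 < J n p) := by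
  have h0 := J_pOpt hn0 hn2
  have hq : (0 : ℝ) < 4 - n ^ 2 := by nlinarith
  have hpos : 0 < n / Real.sqrt (4 - n ^ 2) := div_pos hn0 (Real.sqrt_pos.2 hq)
  have hanti : StrictAntiOn (J n) (Set.Ioc 0 (n / Real.sqrt (4 - n ^ 2))) := by
    refine strictAntiOn_of_deriv_neg (convex_Ioc _ _)
      (fun x hx => (J_hasDerivAt hn0 hx.1).continuousAt.continuousWithinAt) fun x hx => ?_
    rw [interior_Ioc] at hx
    rw [(J_hasDerivAt hn0 hx.1).deriv]
    exact J_log_neg hn0 hn2 hx.1 hx.2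
  have hmono : StrictMonoOn (J n) (Set.Ici (n / Real.sqrt (4 - n ^ 2))) := by
    refine strictMonoOn_of_deriv_pos (convex_Ici _)
      (fun x hx => (J_hasDerivAt hn0 (hpos.trans_le hx)).continuousAt.continuousWithinAt)
      fun x hx => ?_
    rw [interior_Ici] at hx
    rw [(J_hasDerivAt hn0 (hpos.trans hx)).deriv]
    exact J_log_pos hn0 hn2 hx
  have hmain : ∀ p : ℝ, 0 < p → p ≠ n / Real.sqrt (4 - n ^ 2) → 0 < J n p := by
    intro p hp hne
    rw [← h0]
    rcases lt_or_gt_of_ne hne with h | h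
    · exact hanti ⟨hp, h.le⟩ ⟨hpos, le_rfl⟩ h
    · exact hmono Set.self_mem_Ici (Set.mem_Ici.2 h.le) h
  refine ⟨h0, fun p hp => ?_, hmain⟩
  by_cases h : p = n / Real.sqrt (4 - n ^ 2)
  · rw [h, h0]
  · exact (hmain p hp h).le
end

section
/- Let τ ∈ ℂ with 0 < Im τ and let b ∈ ℝ with Complex.exp (π * Complex.I * b) ≠ 1 (e.g. 0 < b < 1). If f : ℂ → ℂ is entire (Differentiable ℂ f) and satisfies f(v + 1) = f(v) and f(v + τ) = Complex.exp (π * Complex.I * b) * f(v) for all v ∈ ℂ, then f = 0. (This is the uniqueness statement underlying the characterization of the special function Υ_b by its pseudo-periodicity properties and its pole at 0.) -/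
/-!
The multiplier `e^{iπb}` has modulus one, so `‖f‖` is periodic with respect to both `1` and `τ`.
Since `1` and `τ` span `ℂ` over `ℝ`, the function `‖f‖` takes all its values on the compact
fundamental parallelogram `{s + tτ | s, t ∈ [0, 1]}` and is therefore bounded. By Liouville's
theorem `f` is constant, and a constant `c` with `c = e^{iπb} c` and `e^{iπb} ≠ 1` is zero.
-/

/-- A continuous function on `ℂ` with periods `1` and `τ` is bounded above, because all its values
are attained on the compact fundamental parallelogram. -/
lemma exists_bound_of_doubly_periodic (τ : ℂ) (hτ : 0 < τ.im) (g : ℂ → ℝ) (hg : Continuous g)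
    (h1 : Function.Periodic g 1) (h2 : Function.Periodic g τ) : ∃ C, ∀ v, g v ≤ C := by
  have hK : IsCompact (Set.Icc (0 : ℝ) 1 ×ˢ Set.Icc (0 : ℝ) 1) := isCompact_Icc.prod isCompact_Icc
  have hc : Continuous fun p : ℝ × ℝ => g ((p.1 : ℂ) + p.2 * τ) := by fun_prop
  obtain ⟨C, hC⟩ := hK.bddAbove_image hc.continuousOn
  refine ⟨C, fun v => ?_⟩
  -- the real coordinates of `v` in the basis `1, τ`
  obtain ⟨s, t, rfl⟩ : ∃ s t : ℝ, v = (s : ℂ) + t * τ := by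
    refine ⟨v.re - v.im / τ.im * τ.re, v.im / τ.im, ?_⟩
    apply Complex.ext
    · simp [-Complex.ofReal_sub, -Complex.ofReal_mul, -Complex.ofReal_div]
    · simp [-Complex.ofReal_sub, -Complex.ofReal_mul, -Complex.ofReal_div, hτ.ne']
  have hred : g ((s : ℂ) + t * τ) = g (((Int.fract s : ℝ) : ℂ) + (Int.fract t : ℝ) * τ) := by
    rw [← h1.int_mul (-⌊s⌋), ← h2.int_mul (-⌊t⌋) (_ + _)]
    congr 1
    simp only [Int.fract, Int.cast_neg, Complex.ofReal_sub, Complex.ofReal_intCast]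
    ring
  rw [hred]
  exact hC ⟨(Int.fract s, Int.fract t),
    ⟨⟨Int.fract_nonneg s, (Int.fract_lt_one s).le⟩,
      ⟨Int.fract_nonneg t, (Int.fract_lt_one t).le⟩⟩, rfl⟩

/-- Uniqueness underlying the characterization of `Υ_b`: an entire function which is
`1`-periodic and pseudo-periodic in the direction `τ` with multiplier `e^{iπb} ≠ 1`
vanishes identically. -/
theorem entire_pseudo_periodic_eq_zero (τ : ℂ) (hτ : 0 < τ.im) (b : ℝ)
    (hb : Complex.exp ((Real.pi : ℂ) * Complex.I * (b : ℂ)) ≠ 1)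
    (f : ℂ → ℂ) (hf : Differentiable ℂ f)
    (h1 : ∀ v : ℂ, f (v + 1) = f v)
    (h2 : ∀ v : ℂ, f (v + τ) = Complex.exp ((Real.pi : ℂ) * Complex.I * (b : ℂ)) * f v) :
    f = 0 := by
  have hnorm : ‖Complex.exp ((Real.pi : ℂ) * Complex.I * (b : ℂ))‖ = 1 := by
    simp [Complex.norm_exp]
  obtain ⟨C, hC⟩ := exists_bound_of_doubly_periodic τ hτ (fun v => ‖f v‖) hf.continuous.norm
    (fun v => by simp only [h1]) (fun v => by simp only [h2, norm_mul, hnorm, one_mul])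
  have hbdd : Bornology.IsBounded (Set.range f) :=
    isBounded_iff_forall_norm_le.2 ⟨C, by rintro _ ⟨v, rfl⟩; exact hC v⟩
  funext v
  have hv := h2 v
  rw [hf.apply_eq_apply_of_bounded hbdd (v + τ) v] at hv
  by_contra hne
  exact hb (mul_right_cancel₀ hne (by rw [one_mul]; exact hv.symm))
end

section
/- Assume θ₁(v, τ) ≠ 0 and θ₁(-b/2, τ) ≠ 0. Then the modular identity holds: Υ_b(v) = (Complex.exp (π * Complex.I * b * v / τ) / τ) * (θ₁′(0, -1/τ) / θ₁(-b/(2*τ), -1/τ)) * (θ₁((v - b/2)/τ, -1/τ) / θ₁(v/τ, -1/τ)). (For τ = iT this is the paper's expression with prefactor e^{iπbv/τ}/(iT), obtained from the modular transformation of θ₁.) -/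
/-!
The identity follows from the modular transformation
`θ₁(v, τ) = C · exp(-πiv²/τ) · θ₁(v/τ, -1/τ)`, with `C ≠ 0` independent of `v`
(`theta1_modular`). It is deduced from the functional equation of Mathlib's `jacobiTheta₂`
together with its quasi-periodicity, since `θ₁` is an exponential times `jacobiTheta₂` at a
shifted argument.

Differentiating at `v = 0` gives `θ₁′(0, τ) = (C/τ) · θ₁′(0, -1/τ)`, because the Gaussian factor
equals `1` and has zero derivative there. In the quotient defining `Υ_b` the constants `C` cancel,
and the Gaussian factors combine to `exp(πibv/τ)` because `v² + (b/2)² - (v - b/2)² = bv`.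
-/

open Complex

/-- The Jacobi theta function
`θ₁(v,τ) = -∑_{m ∈ ℤ} exp(iπτ(m+1/2)² + iπ(v+1/2)(2m+1))`. -/
noncomputable def theta1 (v τ : ℂ) : ℂ :=
  - ∑' m : ℤ, Complex.exp ((Real.pi : ℂ) * Complex.I * τ * ((m : ℂ) + 1 / 2) ^ 2 +
      (Real.pi : ℂ) * Complex.I * (v + 1 / 2) * (2 * (m : ℂ) + 1))

/-- `θ₁′`, the derivative of `θ₁` in its first variable. -/
noncomputable def theta1d (v τ : ℂ) : ℂ := deriv (fun w => theta1 w τ) v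

/-- `θ₁″`, the second derivative of `θ₁` in its first variable. -/
noncomputable def theta1dd (v τ : ℂ) : ℂ := deriv (fun w => theta1d w τ) v

/-- `θ₁‴`, the third derivative of `θ₁` in its first variable. -/
noncomputable def theta1ddd (v τ : ℂ) : ℂ := deriv (fun w => theta1dd w τ) v

/-- The special function `Υ_b(v) = (θ₁′(0,τ)/θ₁(-b/2,τ)) · (θ₁(v-b/2,τ)/θ₁(v,τ))`. -/
noncomputable def Upsilon (b : ℝ) (τ v : ℂ) : ℂ :=
  (theta1d 0 τ / theta1 (-(b : ℂ) / 2) τ) * (theta1 (v - (b : ℂ) / 2) τ / theta1 v τ)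

/-- Expanding the square in the exponent turns the series of `θ₁` into that of `jacobiTheta₂`. -/
lemma theta1_eq_jacobiTheta₂ (v τ : ℂ) :
    theta1 v τ = -(cexp (Real.pi * I * τ / 4 + Real.pi * I * (v + 1 / 2)) *
      jacobiTheta₂ (v + (1 + τ) / 2) τ) := by
  rw [theta1, jacobiTheta₂, ← tsum_mul_left]
  congr 1
  refine tsum_congr fun m => ?_
  rw [jacobiTheta₂_term, ← Complex.exp_add]
  congr 1
  ring

lemma differentiable_theta1 {τ : ℂ} (hτ : 0 < τ.im) : Differentiable ℂ (fun w => theta1 w τ) := by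
  intro w
  simp only [theta1_eq_jacobiTheta₂]
  have h : DifferentiableAt ℂ (fun w : ℂ => jacobiTheta₂ (w + (1 + τ) / 2) τ) w :=
    (differentiableAt_jacobiTheta₂_fst (w + (1 + τ) / 2) hτ).comp
      (f := fun w : ℂ => w + (1 + τ) / 2) w (by fun_prop)
  fun_prop

lemma theta1_modular {τ : ℂ} (hτ : 0 < τ.im) :
    ∃ C : ℂ, C ≠ 0 ∧ ∀ v : ℂ,
      theta1 v τ = C * cexp (-Real.pi * I * v ^ 2 / τ) * theta1 (v / τ) (-1 / τ) := by
  have hτ0 : τ ≠ 0 := by rintro rfl; simp at hτ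
  refine ⟨1 / (-I * τ) ^ (1 / 2 : ℂ) * cexp (Real.pi * I / 2), ?_, fun v => ?_⟩
  · refine mul_ne_zero (one_div_ne_zero ?_) (Complex.exp_ne_zero _)
    simp [Complex.cpow_eq_zero_iff, hτ0]
  rw [theta1_eq_jacobiTheta₂, theta1_eq_jacobiTheta₂, jacobiTheta₂_functional_equation]
  -- The functional equation lands one quasi-period `-1/τ` away from the argument wanted.
  have harg : v / τ + (1 + -1 / τ) / 2 = (v + (1 + τ) / 2) / τ + -1 / τ := by
    field_simp
    ring
  rw [harg, jacobiTheta₂_add_left']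
  have hexp : cexp (Real.pi * I * τ / 4 + Real.pi * I * (v + 1 / 2)) *
        cexp (-Real.pi * I * (v + (1 + τ) / 2) ^ 2 / τ) =
      cexp (Real.pi * I / 2) * cexp (-Real.pi * I * v ^ 2 / τ) *
        (cexp (Real.pi * I * (-1 / τ) / 4 + Real.pi * I * (v / τ + 1 / 2)) *
          cexp (-Real.pi * I * (-1 / τ + 2 * ((v + (1 + τ) / 2) / τ)))) := by
    simp only [← Complex.exp_add]
    congr 1
    field_simp
    ring
  linear_combination (-(1 / (-I * τ) ^ (1 / 2 : ℂ)) *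
    jacobiTheta₂ ((v + (1 + τ) / 2) / τ) (-1 / τ)) * hexp

/-- The derivative at `0` of the transformation law; the Gaussian factor contributes nothing. -/
lemma theta1d_zero_modular {τ C : ℂ} (hτ : 0 < τ.im)
    (h : ∀ v : ℂ,
      theta1 v τ = C * cexp (-Real.pi * I * v ^ 2 / τ) * theta1 (v / τ) (-1 / τ)) :
    theta1d 0 τ = C / τ * theta1d 0 (-1 / τ) := by
  have hτ0 : τ ≠ 0 := by rintro rfl; simp at hτ
  have hτ' : 0 < (-1 / τ).im := by
    rw [neg_div, neg_im, one_div, inv_im, neg_div, neg_neg]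
    exact div_pos hτ (normSq_pos.mpr hτ0)
  have hθ : HasDerivAt (fun w => theta1 w (-1 / τ)) (theta1d 0 (-1 / τ)) (0 / τ) := by
    rw [zero_div]
    exact (differentiable_theta1 hτ' 0).hasDerivAt
  have hcomp := hθ.comp (0 : ℂ) ((hasDerivAt_id (0 : ℂ)).div_const τ)
  have hgauss :=
    (((((hasDerivAt_id (0 : ℂ)).pow 2).const_mul (-Real.pi * I)).div_const τ).cexp).const_mul C
  have hprod := hgauss.mul hcomp
  rw [theta1d, funext h]
  refine (hprod.congr_deriv ?_).deriv
  simp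
  ring

/-- The modular identity for `Υ_b`, obtained from the modular transformation of `θ₁`. -/
theorem Upsilon_modular (τ : ℂ) (hτ : 0 < τ.im) (b : ℝ) (hb0 : 0 < b) (hb1 : b < 1)
    (v : ℂ) (hv : theta1 v τ ≠ 0) (h2 : theta1 (-(b : ℂ) / 2) τ ≠ 0) :
    Upsilon b τ v =
      (Complex.exp ((Real.pi : ℂ) * Complex.I * (b : ℂ) * v / τ) / τ) *
        (theta1d 0 (-1 / τ) / theta1 (-(b : ℂ) / (2 * τ)) (-1 / τ)) *
        (theta1 ((v - (b : ℂ) / 2) / τ) (-1 / τ) / theta1 (v / τ) (-1 / τ)) := by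
  obtain ⟨C, hC, h⟩ := theta1_modular hτ
  have hτ0 : τ ≠ 0 := by rintro rfl; simp at hτ
  have hd := theta1d_zero_modular hτ h
  have hbτ : -(b : ℂ) / 2 / τ = -(b : ℂ) / (2 * τ) := div_div _ _ _
  have hb := h (-(b : ℂ) / 2)
  rw [hbτ] at hb
  have hv1 : theta1 (v / τ) (-1 / τ) ≠ 0 := fun h0 => hv (by rw [h v, h0, mul_zero])
  have hB1 : theta1 (-(b : ℂ) / (2 * τ)) (-1 / τ) ≠ 0 :=
    fun h0 => h2 (by rw [hb, h0, mul_zero])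
  have hexp : cexp (-Real.pi * I * (v - (b : ℂ) / 2) ^ 2 / τ) =
      cexp (Real.pi * I * b * v / τ) * (cexp (-Real.pi * I * (-(b : ℂ) / 2) ^ 2 / τ) *
        cexp (-Real.pi * I * v ^ 2 / τ)) := by
    simp only [← Complex.exp_add]
    congr 1
    field_simp
    ring
  rw [Upsilon, hd, hb, h v, h (v - (b : ℂ) / 2), hexp]
  have e1 := Complex.exp_ne_zero (-Real.pi * I * (-(b : ℂ) / 2) ^ 2 / τ)
  have e2 := Complex.exp_ne_zero (-Real.pi * I * v ^ 2 / τ)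
  -- Opaque names keep `field_simp` from rewriting inside the exponents and theta arguments.
  generalize cexp (-Real.pi * I * (-(b : ℂ) / 2) ^ 2 / τ) = E1 at *
  generalize cexp (-Real.pi * I * v ^ 2 / τ) = E2 at *
  generalize cexp (Real.pi * I * b * v / τ) = E3 at *
  generalize theta1 (v / τ) (-1 / τ) = A at *
  generalize theta1 (-(b : ℂ) / (2 * τ)) (-1 / τ) = B at *
  generalize theta1 ((v - (b : ℂ) / 2) / τ) (-1 / τ) = D at *
  generalize theta1d 0 (-1 / τ) = F at *
  field_simp
end

section
/- Let g, i₀, i_half ∈ ℕ with i₀ ≥ 1 and 2g - 2 + i₀ + i_half ≥ 1, and set k = i₀ + i_half. Assume (g,k) ≠ (0,3), (g,k) ≠ (0,4), (g,k,i₀) ≠ (1,1,1), and (g,k,i₀) ≠ (0,5,1). Then β(g, i₀-1, i_half+1) = β(g, i₀, i_half) + Δ, where Δ = b - (𝔡·b/2 - 1) if i_half = 0; Δ = -b/2 if i_half = 1; Δ = -(𝔡·b/2 - 1) if i_half is even and i_half ≥ 2; and Δ = b/2 if i_half is odd and i_half ≥ 3. -/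
/-!
Both sides have the same `k = i₀ + i_half`, and `i₀ + (k mod 2)` has the parity of `i_half`.
Decrementing `i₀` therefore lowers `β₂` by one exactly when `i_half` is even (`beta2_decrement`),
while the change of `β₁` is read off from its definition (`beta1_succ`). The excluded cases are those
where the decremented `β₂` could fail to be positive (`beta2_pred_pos`), so both values of `β` are
given by the affine formula and the two changes add up to the claimed increment.
-/

/-- `β₁(i) = ⌊i/2⌋ + 2·δ_{i,1}`. -/
def beta1 (i : ℕ) : ℕ := i / 2 + (if i = 1 then 2 else 0)

/-- `β₂(g,k,i₀) = 2g - 2 + ⌊k/2⌋ + ⌊(i₀ + (k mod 2))/2⌋`. -/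
def beta2 (g k i₀ : ℕ) : ℤ :=
  2 * (g : ℤ) - 2 + ((k / 2 : ℕ) : ℤ) + (((i₀ + k % 2) / 2 : ℕ) : ℤ)

/-- The critical exponent `β(g,i₀,i_half)`. -/
noncomputable def beta (b d : ℝ) (g i₀ ih : ℕ) : ℝ :=
  if 0 < beta2 g (i₀ + ih) i₀ then
    (beta1 ih : ℝ) * (b / 2) + (beta2 g (i₀ + ih) i₀ : ℝ) * (d * b / 2 - 1)
  else 0

theorem beta2_decrement (g j ih : ℕ) :
    beta2 g (j + 1 + ih) j = beta2 g (j + 1 + ih) (j + 1) - (if ih % 2 = 0 then 1 else 0) := by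
  unfold beta2
  split_ifs <;> omega

theorem beta1_succ (ih : ℕ) :
    (beta1 (ih + 1) : ℤ) = beta1 ih +
      (if ih = 0 then 2 else if ih = 1 then -1 else if ih % 2 = 0 then 0 else 1) := by
  unfold beta1
  split_ifs <;> omega

/-- Outside the exceptional cases `β₂` stays positive after the decrement: for `g ≥ 2` the term
`2g - 2` suffices, for `g = 1` one needs `k ≥ 2`, and for `g = 0` either `k ≥ 6`, or `k = 5` and
`j ≥ 1`, where `j = i₀ - 1`. -/
theorem beta2_pred_pos (g j ih : ℕ)
    (hχ : 1 ≤ 2 * (g : ℤ) - 2 + ((j + 1 : ℕ) : ℤ) + (ih : ℤ))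
    (h1 : ¬(g = 0 ∧ j + 1 + ih = 3)) (h2 : ¬(g = 0 ∧ j + 1 + ih = 4))
    (h3 : ¬(g = 1 ∧ j + 1 + ih = 1 ∧ j + 1 = 1))
    (h4 : ¬(g = 0 ∧ j + 1 + ih = 5 ∧ j + 1 = 1)) :
    0 < beta2 g (j + 1 + ih) j := by
  unfold beta2
  omega

/-- The variation of `β` when decrementing `i₀` and incrementing `i_half`
(away from the exceptional cases). -/
theorem beta_decrement (b d : ℝ) (hb0 : 0 < b) (hb1 : b < 1 / 2) (hd : d = 1 ∨ d = -1)
    (g i₀ ih : ℕ) (hi₀ : 1 ≤ i₀) (hχ : 1 ≤ 2 * (g : ℤ) - 2 + (i₀ : ℤ) + (ih : ℤ))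
    (h1 : ¬(g = 0 ∧ i₀ + ih = 3)) (h2 : ¬(g = 0 ∧ i₀ + ih = 4))
    (h3 : ¬(g = 1 ∧ i₀ + ih = 1 ∧ i₀ = 1)) (h4 : ¬(g = 0 ∧ i₀ + ih = 5 ∧ i₀ = 1)) :
    beta b d g (i₀ - 1) (ih + 1) = beta b d g i₀ ih +
      (if ih = 0 then b - (d * b / 2 - 1)
       else if ih = 1 then -(b / 2)
       else if ih % 2 = 0 then -(d * b / 2 - 1)
       else b / 2) := by
  obtain ⟨j, rfl⟩ : ∃ j, i₀ = j + 1 := ⟨i₀ - 1, by omega⟩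
  have hpos := beta2_pred_pos g j ih hχ h1 h2 h3 h4
  have hdec := beta2_decrement g j ih
  have hpos' : 0 < beta2 g (j + 1 + ih) (j + 1) := by
    split_ifs at hdec <;> omega
  have hk : j + (ih + 1) = j + 1 + ih := by omega
  have hdecR : (beta2 g (j + 1 + ih) j : ℝ) =
      beta2 g (j + 1 + ih) (j + 1) - (if ih % 2 = 0 then 1 else 0) := by
    rw [hdec]; push_cast; rfl
  have hsuccR : (beta1 (ih + 1) : ℝ) = beta1 ih +
      (if ih = 0 then 2 else if ih = 1 then -1 else if ih % 2 = 0 then 0 else 1) := by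
    exact_mod_cast congrArg (Int.cast : ℤ → ℝ) (beta1_succ ih)
  simp only [beta, Nat.add_sub_cancel, hk, if_pos hpos, if_pos hpos', hdecR, hsuccR]
  split_ifs <;> first | omega | ring
end

section
/- For all ε, σ, σ' ∈ {0, 1/2}, f(ε, σ, σ') ≥ 𝔡·b/2 - 1, with equality if and only if (ε, σ, σ') = (0, 0, 0). Consequently, for any finite index set I and any assignment i ↦ (ε_i, σ_i, σ'_i) ∈ {0,1/2}³, ∑_{i ∈ I} f(ε_i, σ_i, σ'_i) ≥ |I| · (𝔡·b/2 - 1), with equality if and only if every triple equals (0,0,0). (This is the minimization underlying the statement that, for a graph with 2g-2+k trivalent vertices, the coloring assigning 0 to each edge realizes the minimum (2g-2+k)(𝔡b/2-1) of f(𝒢;σ).) -/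
/-!
The bound for a single triple (`fExp_min_single`) is a finite check that uses only `b > 0` and
`d·b/2 - 1 < 0`. Summing a termwise inequality over `I` gives the second bound, and equality of the
sums forces equality in every term.
-/

open Classical in
/-- `ε ⊕ ε' = 0` if `ε = ε'` and `1/2` otherwise. -/
noncomputable def oplus (ε ε' : ℝ) : ℝ := if ε = ε' then 0 else 1 / 2

/-- `f(ε,σ,σ') = b·((ε⊕σ) + (ε⊕σ')) + (d·b/2 - 1)·(1 - 2ε)`. -/
noncomputable def fExp (b d ε σ σ' : ℝ) : ℝ :=
  b * (oplus ε σ + oplus ε σ') + (d * b / 2 - 1) * (1 - 2 * ε)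

/-- For `ε = 0` the value exceeds the bound by `b·((0⊕σ) + (0⊕σ')) ≥ 0`; for `ε = 1/2` the value is
nonnegative, while the bound is negative since `|d·b/2| < 1`. -/
theorem fExp_min_single (b d : ℝ) (hb0 : 0 < b) (hb1 : b < 1 / 2) (hd : d = 1 ∨ d = -1)
    (ε σ σ' : ℝ) (hε : ε ∈ ({0, 1 / 2} : Set ℝ)) (hσ : σ ∈ ({0, 1 / 2} : Set ℝ))
    (hσ' : σ' ∈ ({0, 1 / 2} : Set ℝ)) :
    d * b / 2 - 1 ≤ fExp b d ε σ σ' ∧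
      (fExp b d ε σ σ' = d * b / 2 - 1 ↔ ε = 0 ∧ σ = 0 ∧ σ' = 0) := by
  have hneg : d * b / 2 - 1 < 0 := by
    rcases hd with rfl | rfl <;> linarith
  simp only [Set.mem_insert_iff, Set.mem_singleton_iff] at hε hσ hσ'
  rcases hε with rfl | rfl <;> rcases hσ with rfl | rfl <;> rcases hσ' with rfl | rfl <;>
    norm_num [fExp, oplus] <;> grind

/-- On the two-element set `{0, 1/2}`, `f(ε,σ,σ') ≥ d·b/2 - 1` with equality iff
`(ε,σ,σ') = (0,0,0)`; consequently, a sum of such values over a finite index set is at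
least `|I|·(d·b/2 - 1)`, with equality iff every triple is `(0,0,0)`. -/
theorem fExp_min (b d : ℝ) (hb0 : 0 < b) (hb1 : b < 1 / 2) (hd : d = 1 ∨ d = -1) :
    (∀ ε σ σ' : ℝ, ε ∈ ({0, 1 / 2} : Set ℝ) → σ ∈ ({0, 1 / 2} : Set ℝ) →
      σ' ∈ ({0, 1 / 2} : Set ℝ) →
        (d * b / 2 - 1 ≤ fExp b d ε σ σ' ∧
          (fExp b d ε σ σ' = d * b / 2 - 1 ↔ ε = 0 ∧ σ = 0 ∧ σ' = 0))) ∧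
    (∀ (ι : Type) (I : Finset ι) (e s s' : ι → ℝ),
      (∀ i ∈ I, e i ∈ ({0, 1 / 2} : Set ℝ) ∧ s i ∈ ({0, 1 / 2} : Set ℝ) ∧
        s' i ∈ ({0, 1 / 2} : Set ℝ)) →
      ((I.card : ℝ) * (d * b / 2 - 1) ≤ ∑ i ∈ I, fExp b d (e i) (s i) (s' i) ∧
        (∑ i ∈ I, fExp b d (e i) (s i) (s' i) = (I.card : ℝ) * (d * b / 2 - 1) ↔
          ∀ i ∈ I, e i = 0 ∧ s i = 0 ∧ s' i = 0))) := by
  have key := fExp_min_single b d hb0 hb1 hd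
  refine ⟨key, fun ι I e s s' h => ?_⟩
  have hle : ∀ i ∈ I, d * b / 2 - 1 ≤ fExp b d (e i) (s i) (s' i) := fun i hi =>
    (key _ _ _ (h i hi).1 (h i hi).2.1 (h i hi).2.2).1
  have hconst : (I.card : ℝ) * (d * b / 2 - 1) = ∑ _i ∈ I, (d * b / 2 - 1) := by
    rw [Finset.sum_const, nsmul_eq_mul]
  rw [hconst]
  refine ⟨Finset.sum_le_sum hle, ?_⟩
  rw [eq_comm, Finset.sum_eq_sum_iff_of_le hle]
  refine forall₂_congr fun i hi => ?_
  rw [eq_comm]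
  exact (key _ _ _ (h i hi).1 (h i hi).2.1 (h i hi).2.2).2
end

section
/- Let r > 0 and let f : ℂ → ℂ be analytic on the open ball {w : |w| < r} with f(-w) = f(w) for all |w| < r and with second derivative f″(0) ≠ 0. Then there exist C > 0 and δ ∈ (0, r) such that for all w ∈ ℂ with 0 < |w| < δ one has f′(w) ≠ 0 and |S_f(w) + 3/(2·w²)| ≤ C·|w|²; i.e., the Schwarzian derivative of an even analytic function with a nondegenerate quadratic critical point at 0 satisfies S_f(w) = -3/(2w²) + O(w²) near 0. -/
/-!
The derivative of an even analytic function is odd, hence divisible by `w` with an even analytic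
quotient (`exists_deriv_eq_mul_even`). Applying this three times gives even analytic germs
`g, m, n` at `0` with `f′ = w g`, `g′ = w m`, `m′ = w n`, and therefore
`f″ = g + w² m`, `f‴ = 3 w m + w³ n`. In particular `g(0) = f″(0) ≠ 0`, and substituting,
`S_f(w) + 3/(2w²) = w² (n/g - (3/2) (m/g)²)`,
where the bracket is continuous at `0`, hence bounded near `0`.
-/

/-- The Schwarzian derivative `S_f(w) = f‴(w)/f′(w) - (3/2)·(f″(w)/f′(w))²`. -/
noncomputable def schwarzian (f : ℂ → ℂ) (w : ℂ) : ℂ :=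
  iteratedDeriv 3 f w / deriv f w - (3 / 2) * (iteratedDeriv 2 f w / deriv f w) ^ 2

open Filter Topology

/-- The derivative of an even analytic germ at `0` is `w` times an even analytic germ. -/
lemma exists_deriv_eq_mul_even {F : ℂ → ℂ} (hF : AnalyticAt ℂ F 0)
    (heven : ∀ᶠ w in 𝓝 (0 : ℂ), F (-w) = F w) :
    ∃ G : ℂ → ℂ, AnalyticAt ℂ G 0 ∧ (∀ᶠ w in 𝓝 (0 : ℂ), G (-w) = G w) ∧
      deriv F =ᶠ[𝓝 0] fun w => w * G w := by
  have hodd : ∀ᶠ w in 𝓝 (0 : ℂ), deriv F (-w) = -deriv F w := by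
    have h : (fun w => F (-w)) =ᶠ[𝓝 0] F := heven
    filter_upwards [h.deriv] with w hw
    rw [deriv_comp_neg] at hw
    rw [← hw, neg_neg]
  have h0 : deriv F 0 = 0 := by
    have h := hodd.self_of_nhds
    rw [neg_zero] at h
    exact self_eq_neg.mp h
  have hmul : ∀ w, deriv F w = w * dslope (deriv F) 0 w := by
    intro w
    have h := sub_smul_dslope (deriv F) 0 w
    simpa [h0] using h.symm
  refine ⟨dslope (deriv F) 0, ?_, ?_, Eventually.of_forall hmul⟩
  · obtain ⟨p, hp⟩ := hF.deriv
    exact hp.has_fpower_series_dslope_fslope.analyticAt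
  · filter_upwards [hodd] with w hw
    rcases eq_or_ne w 0 with rfl | hw0
    · rw [neg_zero]
    · rw [hmul (-w), hmul w] at hw
      refine mul_left_cancel₀ hw0 ?_
      linear_combination -hw

/-- The Schwarzian derivative of an even analytic function with a nondegenerate quadratic
critical point at `0` satisfies `S_f(w) = -3/(2w²) + O(w²)` near `0`. -/
theorem schwarzian_even_expansion (r : ℝ) (hr : 0 < r) (f : ℂ → ℂ)
    (hf : AnalyticOnNhd ℂ f (Metric.ball (0 : ℂ) r))
    (heven : ∀ w : ℂ, ‖w‖ < r → f (-w) = f w)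
    (h2 : iteratedDeriv 2 f 0 ≠ 0) :
    ∃ C : ℝ, 0 < C ∧ ∃ δ : ℝ, 0 < δ ∧ δ < r ∧
      ∀ w : ℂ, 0 < ‖w‖ → ‖w‖ < δ →
        deriv f w ≠ 0 ∧ ‖schwarzian f w + 3 / (2 * w ^ 2)‖ ≤ C * ‖w‖ ^ 2 := by
  have hfa : AnalyticAt ℂ f 0 := hf 0 (Metric.mem_ball_self hr)
  have hev : ∀ᶠ w in 𝓝 (0 : ℂ), f (-w) = f w := by
    filter_upwards [Metric.ball_mem_nhds (0 : ℂ) hr] with w hw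
    exact heven w (by simpa using hw)
  obtain ⟨g, hg, hge, hfg⟩ := exists_deriv_eq_mul_even hfa hev
  obtain ⟨m, hm, hme, hgm⟩ := exists_deriv_eq_mul_even hg hge
  obtain ⟨n, hn, -, hmn⟩ := exists_deriv_eq_mul_even hm hme
  have hd2 : iteratedDeriv 2 f =ᶠ[𝓝 0] fun w => g w + w ^ 2 * m w := by
    rw [iteratedDeriv_succ, iteratedDeriv_one]
    filter_upwards [hfg.deriv, hgm, hg.eventually_analyticAt] with w h1 h3 h4
    rw [h1, ((hasDerivAt_id' w).fun_mul h4.differentiableAt.hasDerivAt).deriv, h3]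
    ring
  have hd3 : iteratedDeriv 3 f =ᶠ[𝓝 0] fun w => 3 * w * m w + w ^ 3 * n w := by
    rw [iteratedDeriv_succ]
    filter_upwards [hd2.deriv, hgm, hmn, hg.eventually_analyticAt, hm.eventually_analyticAt]
      with w h1 h3 h4 h5 h6
    rw [h1, (h5.differentiableAt.hasDerivAt.fun_add
      ((hasDerivAt_pow 2 w).fun_mul h6.differentiableAt.hasDerivAt)).deriv, h3, h4]
    push_cast
    ring
  have hg0 : g 0 ≠ 0 := by
    have h := hd2.self_of_nhds
    simp only [ne_eq, OfNat.ofNat_ne_zero, not_false_eq_true, zero_pow, zero_mul, add_zero] at h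
    rwa [← h]
  have hcont : ContinuousAt (fun w => ‖n w / g w - 3 / 2 * (m w / g w) ^ 2‖) 0 :=
    ((hn.continuousAt.div hg.continuousAt hg0).sub
      (continuousAt_const.mul ((hm.continuousAt.div hg.continuousAt hg0).pow 2))).norm
  set C : ℝ := ‖n 0 / g 0 - 3 / 2 * (m 0 / g 0) ^ 2‖ + 1 with hC
  have hbd : ∀ᶠ w in 𝓝 (0 : ℂ), ‖n w / g w - 3 / 2 * (m w / g w) ^ 2‖ < C :=
    hcont.eventually_lt_const (by rw [hC]; exact lt_add_one _)
  obtain ⟨ε, hε, H⟩ := Metric.eventually_nhds_iff.mp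
    (hbd.and (hfg.and (hd2.and (hd3.and (hg.continuousAt.eventually_ne hg0)))))
  refine ⟨C, by positivity, min ε (r / 2), by positivity,
    (min_le_right _ _).trans_lt (half_lt_self hr), fun w hw0 hw => ?_⟩
  obtain ⟨hb, h1, h2', h3, hgw⟩ := H (y := w) (by simpa using hw.trans_le (min_le_left _ _))
  have hwne : w ≠ 0 := norm_pos_iff.mp hw0
  refine ⟨by rw [h1]; exact mul_ne_zero hwne hgw, ?_⟩
  have key : schwarzian f w + 3 / (2 * w ^ 2) =
      (n w / g w - 3 / 2 * (m w / g w) ^ 2) * w ^ 2 := by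
    rw [schwarzian, h1, h2', h3]
    field_simp
    ring
  rw [key, norm_mul, norm_pow]
  gcongr
end
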